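/- Let n ≥ 2 and L ≥ 1 be integers and let r, s ∈ {1,…,n}. Define W_{rs} = Σ over dyads d ∈ D_n containing r and dyads d' ∈ D_n containing s of k_L(Δ(d,d')). Then |W_{rs} − (n−1)² k_L(|r−s|)| ≤ 6 n L. -/

import Mathlib

open Finset

/-- The dyad set `D_n = {(i,j) : 1 ≤ i < j ≤ n}`. -/
def dyads (n : ℕ) : Finset (ℕ × ℕ) :=
  (Finset.Icc 1 n ×ˢ Finset.Icc 1 n).filter (fun p => p.1 < p.2)

/-- The endpoint distance `Δ(d,d') = min{|i−p|, |i−q|, |j−p|, |j−q|}` between dyads. -/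
def endpointDist (d d' : ℕ × ℕ) : ℕ :=
  min (min (Nat.dist d.1 d'.1) (Nat.dist d.1 d'.2))
      (min (Nat.dist d.2 d'.1) (Nat.dist d.2 d'.2))

/-- The Bartlett kernel `k_L(h) = max(0, 1 − |h|/L)` for a natural lag `h`. -/
noncomputable def bartlett (L h : ℕ) : ℝ := max 0 (1 - (h : ℝ) / L)

lemma bartlett_nonneg' (L h : ℕ) : 0 ≤ bartlett L h := le_max_left _ _

lemma bartlett_le_ite (L h : ℕ) (hL : 1 ≤ L) : bartlett L h ≤ if h < L then 1 else 0 := by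
  have hL' : (0 : ℝ) < L := by exact_mod_cast hL
  have h0 : (0 : ℝ) ≤ (h : ℝ) / L := by positivity
  unfold bartlett
  split_ifs with hh
  · exact max_le zero_le_one (by linarith)
  · refine max_le le_rfl ?_
    have : (L : ℝ) ≤ h := by exact_mod_cast not_lt.mp hh
    have : 1 ≤ (h : ℝ) / L := by rwa [le_div_iff₀ hL', one_mul]
    linarith

lemma bartlett_anti (L : ℕ) : Antitone (bartlett L) := by
  intro a b hab
  unfold bartlett
  gcongr

lemma bartlett_sum_le (L c : ℕ) (hL : 1 ≤ L) (T : Finset ℕ) :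
    ∑ b ∈ T, bartlett L (Nat.dist c b) ≤ 2 * (L : ℝ) := by
  calc ∑ b ∈ T, bartlett L (Nat.dist c b)
      ≤ ∑ b ∈ T, (if Nat.dist c b < L then (1 : ℝ) else 0) :=
        Finset.sum_le_sum fun b _ => bartlett_le_ite L _ hL
    _ = ((T.filter fun b => Nat.dist c b < L).card : ℝ) := by simp
    _ ≤ ((Finset.Ico (c + 1 - L) (c + L)).card : ℝ) := by
        norm_cast
        apply Finset.card_le_card
        intro b hb
        have hb' := (Finset.mem_filter.mp hb).2
        rw [Finset.mem_Ico]
        unfold Nat.dist at hb'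
        omega
    _ ≤ 2 * (L : ℝ) := by
        rw [Nat.card_Ico]
        have : c + L - (c + 1 - L) ≤ 2 * L := by omega
        exact_mod_cast this

lemma dyad_sum (n r : ℕ) (hr : r ∈ Finset.Icc 1 n) (f : ℕ × ℕ → ℝ) :
    ∑ d ∈ (dyads n).filter (fun d => d.1 = r ∨ d.2 = r), f d
      = ∑ a ∈ (Finset.Icc 1 n).erase r, f (min a r, max a r) := by
  symm
  rw [Finset.mem_Icc] at hr
  refine Finset.sum_nbij' (fun a => (min a r, max a r)) (fun d => d.1 + d.2 - r) ?_ ?_ ?_ ?_ ?_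
  · intro a ha
    simp only [dyads, Finset.mem_filter, Finset.mem_product, Finset.mem_Icc,
      Finset.mem_erase] at ha ⊢
    omega
  · rintro ⟨i, j⟩ ha
    simp only [dyads, Finset.mem_filter, Finset.mem_product, Finset.mem_Icc,
      Finset.mem_erase] at ha ⊢
    omega
  · intro a ha
    dsimp only
    omega
  · rintro ⟨i, j⟩ ha
    simp only [dyads, Finset.mem_filter, Finset.mem_product, Finset.mem_Icc] at ha
    ext <;> dsimp only <;> omega
  · intro a _
    rfl

lemma pair_bound (L r s a b : ℕ) :
    |bartlett L (endpointDist (min a r, max a r) (min b s, max b s)) - bartlett L (Nat.dist r s)|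
      ≤ bartlett L (Nat.dist r b) + bartlett L (Nat.dist s a) + bartlett L (Nat.dist a b) := by
  have h1 := bartlett_nonneg' L (Nat.dist r b)
  have h2 := bartlett_nonneg' L (Nat.dist s a)
  have h3 := bartlett_nonneg' L (Nat.dist a b)
  have h4 := bartlett_nonneg' L (Nat.dist r s)
  have hD : endpointDist (min a r, max a r) (min b s, max b s)
      = min (min (Nat.dist r s) (Nat.dist r b)) (min (Nat.dist s a) (Nat.dist a b)) := by
    rw [Nat.dist_comm s a]
    unfold endpointDist
    rcases le_total a r with h | h <;> rcases le_total b s with h' | h' <;>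
      simp only [min_eq_left h, max_eq_right h, min_eq_right h, max_eq_left h,
        min_eq_left h', max_eq_right h', min_eq_right h', max_eq_left h'] <;>
      generalize Nat.dist r s = x <;> generalize Nat.dist r b = y <;>
      generalize Nat.dist a s = z <;> generalize Nat.dist a b = w <;> omega
  rw [hD]
  generalize hE : min (min (Nat.dist r s) (Nat.dist r b)) (min (Nat.dist s a) (Nat.dist a b)) = D
  have hle : D ≤ Nat.dist r s := by
    omega
  have hcase : D = Nat.dist r s ∨ D = Nat.dist r b ∨ D = Nat.dist s a ∨ D = Nat.dist a b := by
    omega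
  have hm := bartlett_anti L hle
  rw [abs_of_nonneg (by linarith)]
  rcases hcase with h | h | h | h <;> rw [h] <;> linarith

theorem weighted_dyad_pair_count_approx (n L r s : ℕ) (hn : 2 ≤ n) (hL : 1 ≤ L)
    (hr : r ∈ Finset.Icc 1 n) (hs : s ∈ Finset.Icc 1 n) :
    |(∑ d ∈ (dyads n).filter (fun d => d.1 = r ∨ d.2 = r),
        ∑ d' ∈ (dyads n).filter (fun d' => d'.1 = s ∨ d'.2 = s),
          bartlett L (endpointDist d d'))
      - ((n : ℝ) - 1) ^ 2 * bartlett L (Nat.dist r s)|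
      ≤ 6 * (n : ℝ) * (L : ℝ) := by
  rw [dyad_sum n r hr]
  simp only [dyad_sum n s hs]
  have cr : (((Finset.Icc 1 n).erase r).card : ℝ) = (n : ℝ) - 1 := by
    rw [Finset.card_erase_of_mem hr, Nat.card_Icc, Nat.add_sub_cancel, Nat.cast_sub (by omega)]
    simp
  have cs : (((Finset.Icc 1 n).erase s).card : ℝ) = (n : ℝ) - 1 := by
    rw [Finset.card_erase_of_mem hs, Nat.card_Icc, Nat.add_sub_cancel, Nat.cast_sub (by omega)]
    simp
  generalize (Finset.Icc 1 n).erase r = A at *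
  generalize (Finset.Icc 1 n).erase s = B at *
  have hc : ((n : ℝ) - 1) ^ 2 * bartlett L (Nat.dist r s)
      = ∑ a ∈ A, ∑ b ∈ B, bartlett L (Nat.dist r s) := by
    simp only [Finset.sum_const, nsmul_eq_mul, cr, cs]
    ring
  have hn' : (2 : ℝ) ≤ n := by exact_mod_cast hn
  have hL' : (1 : ℝ) ≤ L := by exact_mod_cast hL
  rw [hc, ← Finset.sum_sub_distrib]
  simp only [← Finset.sum_sub_distrib]
  calc _ ≤ ∑ a ∈ A, ∑ b ∈ B, (bartlett L (Nat.dist r b) + bartlett L (Nat.dist s a)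
            + bartlett L (Nat.dist a b)) := by
        refine (Finset.abs_sum_le_sum_abs _ _).trans (Finset.sum_le_sum fun a _ => ?_)
        exact (Finset.abs_sum_le_sum_abs _ _).trans
          (Finset.sum_le_sum fun b _ => pair_bound L r s a b)
    _ = ((n : ℝ) - 1) * ∑ b ∈ B, bartlett L (Nat.dist r b)
        + ((n : ℝ) - 1) * ∑ a ∈ A, bartlett L (Nat.dist s a)
        + ∑ a ∈ A, ∑ b ∈ B, bartlett L (Nat.dist a b) := by
        simp only [Finset.sum_add_distrib, Finset.sum_const, nsmul_eq_mul, cr, cs,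
          Finset.mul_sum]
    _ ≤ ((n : ℝ) - 1) * (2 * L) + ((n : ℝ) - 1) * (2 * L) + ∑ a ∈ A, (2 * (L : ℝ)) := by
        have h0 : (0 : ℝ) ≤ (n : ℝ) - 1 := by linarith
        exact add_le_add (add_le_add
          (mul_le_mul_of_nonneg_left (bartlett_sum_le L r hL B) h0)
          (mul_le_mul_of_nonneg_left (bartlett_sum_le L s hL A) h0))
          (Finset.sum_le_sum fun a _ => bartlett_sum_le L a hL B)
    _ ≤ 6 * (n : ℝ) * (L : ℝ) := by
        simp only [Finset.sum_const, nsmul_eq_mul, cr]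
        nlinarith
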